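/- Let α, β : V → ℝ be real-linear functionals, let Λ := α + iβ, and let 0 ≤ κ < 1. If Λ is κ-quasi-holomorphic, i.e. |Λ^{(0,1)}| ≤ κ·|Λ^{(1,0)}|, then: (i) α = 0 if and only if β = 0; and (ii) if α ≠ 0 then α and β are linearly independent over ℝ (equivalently, the real-linear map Λ : V → ℂ is surjective). (Pointwise linear-algebra content of the paper's lemma on quasi-holomorphic sections: at a point where the section does not vanish, its covariant derivative either vanishes or is surjective, and the two 1-form components vanish simultaneously.) -/

import Mathlib

/-!
If `Λ` is not surjective, its range lies in a real line of `ℂ`, so some nonzero multiple `c Λ` is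
real-valued. The `(0,1)` and `(1,0)` parts of a real-valued form are complex conjugates of each
other, hence `|Λ⁰¹| = |Λ¹⁰|`. Then `|Λ⁰¹| ≤ κ |Λ¹⁰|` with `κ < 1` forces `Λ = Λ¹⁰ + Λ⁰¹ = 0`.
-/

open Complex ComplexConjugate

section RealLinearAlgebra

theorem exists_forall_im_mul_eq_zero_of_ne_top {p : Submodule ℝ ℂ} (hp : p ≠ ⊤) :
    ∃ c : ℂ, c ≠ 0 ∧ ∀ z ∈ p, (c * z).im = 0 := by
  obtain ⟨w, hw, hw0⟩ := pᗮ.exists_mem_ne_zero_of_ne_bot (mt p.orthogonal_eq_bot_iff.mp hp)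
  refine ⟨I * conj w, mul_ne_zero I_ne_zero (by simpa using hw0), fun z hz => ?_⟩
  have horth : (z * conj w).re = 0 := Submodule.inner_left_of_mem_orthogonal hz hw
  rw [mul_assoc, I_mul_im, mul_comm, horth]

theorem linearIndependent_re_im_of_surjective {V : Type*} [AddCommGroup V] [Module ℝ V]
    [TopologicalSpace V] {Λ : V →L[ℝ] ℂ} (hΛ : Function.Surjective Λ) :
    LinearIndependent ℝ ![reCLM ∘L Λ, imCLM ∘L Λ] := by
  refine LinearIndependent.pair_iff.mpr fun a b hab => ?_
  have hrel (z : ℂ) : a * z.re + b * z.im = 0 := by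
    obtain ⟨v, rfl⟩ := hΛ z
    exact DFunLike.congr_fun hab v
  exact ⟨by simpa using hrel 1, by simpa using hrel I⟩

end RealLinearAlgebra

section Parts

variable {V : Type*} [AddCommGroup V] [Module ℝ V] [TopologicalSpace V]

/-- The `(1,0)` part `Λ¹⁰ = (Λ - i Λ ∘ J) / 2` of a complex-valued real-linear form `Λ`.
The formula makes sense for every endomorphism `J`; it is the complex-linear part of `Λ` when `J`
is a complex structure. -/
noncomputable def holomorphicPart (J : V →L[ℝ] V) (Λ : V →L[ℝ] ℂ) : V →L[ℝ] ℂ :=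
  (1 / 2 : ℂ) • (Λ - I • Λ ∘L J)

/-- The `(0,1)` part `Λ⁰¹ = (Λ + i Λ ∘ J) / 2` of a complex-valued real-linear form `Λ`.
The formula makes sense for every endomorphism `J`; it is the conjugate-linear part of `Λ` when
`J` is a complex structure. -/
noncomputable def antiholomorphicPart (J : V →L[ℝ] V) (Λ : V →L[ℝ] ℂ) : V →L[ℝ] ℂ :=
  (1 / 2 : ℂ) • (Λ + I • Λ ∘L J)

theorem holomorphicPart_apply (J : V →L[ℝ] V) (Λ : V →L[ℝ] ℂ) (v : V) :
    holomorphicPart J Λ v = (1 / 2 : ℂ) * (Λ v - I * Λ (J v)) :=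
  rfl

theorem antiholomorphicPart_apply (J : V →L[ℝ] V) (Λ : V →L[ℝ] ℂ) (v : V) :
    antiholomorphicPart J Λ v = (1 / 2 : ℂ) * (Λ v + I * Λ (J v)) :=
  rfl

theorem holomorphicPart_add_antiholomorphicPart (J : V →L[ℝ] V) (Λ : V →L[ℝ] ℂ) :
    holomorphicPart J Λ + antiholomorphicPart J Λ = Λ := by
  ext v
  rw [add_apply, holomorphicPart_apply, antiholomorphicPart_apply]
  ring

theorem mul_antiholomorphicPart_eq_conj {J : V →L[ℝ] V} {Λ : V →L[ℝ] ℂ} {c : ℂ}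
    (hreal : ∀ v, (c * Λ v).im = 0) (v : V) :
    c * antiholomorphicPart J Λ v = conj (c * holomorphicPart J Λ v) := by
  have hconj (w : V) : conj c * conj (Λ w) = c * Λ w := by
    rw [← map_mul, conj_eq_iff_im.mpr (hreal w)]
  simp only [holomorphicPart_apply, antiholomorphicPart_apply, map_mul, map_sub, map_div₀,
    map_one, map_ofNat, conj_I]
  linear_combination (-1 / 2 : ℂ) * hconj v - I / 2 * hconj (J v)

theorem norm_antiholomorphicPart_apply_eq {J : V →L[ℝ] V} {Λ : V →L[ℝ] ℂ} {c : ℂ} (hc : c ≠ 0)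
    (hreal : ∀ v, (c * Λ v).im = 0) (v : V) :
    ‖antiholomorphicPart J Λ v‖ = ‖holomorphicPart J Λ v‖ := by
  refine mul_left_cancel₀ (norm_ne_zero_iff.mpr hc) ?_
  rw [← norm_mul, ← norm_mul, mul_antiholomorphicPart_eq_conj hreal, norm_conj]

end Parts

section QuasiHolomorphic

variable {V : Type*} [SeminormedAddCommGroup V] [NormedSpace ℝ V]

/-- `Λ` is `κ`-quasi-holomorphic with respect to `J`: its `(0,1)` part is dominated in operator
norm by `κ` times its `(1,0)` part. -/
def IsQuasiHolomorphic (J : V →L[ℝ] V) (κ : ℝ) (Λ : V →L[ℝ] ℂ) : Prop :=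
  ‖antiholomorphicPart J Λ‖ ≤ κ * ‖holomorphicPart J Λ‖

namespace IsQuasiHolomorphic

variable {J : V →L[ℝ] V} {κ : ℝ} {Λ : V →L[ℝ] ℂ}

theorem eq_zero_of_norm_le (hΛ : IsQuasiHolomorphic J κ Λ) (hκ : κ < 1)
    (hle : ‖holomorphicPart J Λ‖ ≤ ‖antiholomorphicPart J Λ‖) : Λ = 0 := by
  have hhol : ‖holomorphicPart J Λ‖ = 0 := by
    nlinarith [norm_nonneg (holomorphicPart J Λ), hle.trans hΛ]
  have hanti : ‖antiholomorphicPart J Λ‖ ≤ 0 := by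
    simpa only [IsQuasiHolomorphic, hhol, mul_zero] using hΛ
  have hnorm : ‖Λ‖ ≤ 0 := by
    rw [← holomorphicPart_add_antiholomorphicPart J Λ]
    exact (norm_add_le _ _).trans (add_nonpos hhol.le hanti)
  ext v
  simpa using Λ.le_of_opNorm_le hnorm v

theorem eq_zero_or_surjective (hΛ : IsQuasiHolomorphic J κ Λ) (hκ : κ < 1) :
    Λ = 0 ∨ Function.Surjective Λ := by
  refine or_iff_not_imp_right.mpr fun hsurj => ?_
  obtain ⟨c, hc, hreal⟩ := exists_forall_im_mul_eq_zero_of_ne_top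
    (mt LinearMap.range_eq_top.mp hsurj)
  have hnorm : ‖antiholomorphicPart J Λ‖ = ‖holomorphicPart J Λ‖ :=
    ContinuousLinearMap.opNorm_ext _ _ <|
      norm_antiholomorphicPart_apply_eq hc fun v => hreal _ ⟨v, rfl⟩
  exact hΛ.eq_zero_of_norm_le hκ hnorm.ge

end IsQuasiHolomorphic

theorem quasi_holomorphic_vanish_or_surjective_general {J : V →L[ℝ] V} {α β : V →L[ℝ] ℝ} {κ : ℝ}
    (hκ : κ < 1) {Λ : V →L[ℝ] ℂ} (hΛ : ∀ v, Λ v = (α v : ℂ) + I * (β v : ℂ))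
    (hqh : IsQuasiHolomorphic J κ Λ) :
    (α = 0 ↔ β = 0) ∧
    (α ≠ 0 → LinearIndependent ℝ ![α, β] ∧ Function.Surjective Λ) := by
  have hα : α = reCLM ∘L Λ := by ext v; simp [hΛ]
  have hβ : β = imCLM ∘L Λ := by ext v; simp [hΛ]
  subst hα hβ
  obtain rfl | hsurj := hqh.eq_zero_or_surjective hκ
  · simp
  · have hli := linearIndependent_re_im_of_surjective hsurj
    exact ⟨iff_of_false (hli.ne_zero 0) (hli.ne_zero 1), fun _ => ⟨hli, hsurj⟩⟩

end QuasiHolomorphic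

/-- Let `V` be a finite-dimensional real inner product space with a
compatible complex structure `J`, let `α β : V → ℝ` be continuous real-linear
functionals, `Λ := α + iβ`, and `0 ≤ κ < 1`.  If `Λ` is κ-quasi-holomorphic
(`‖Λ⁰¹‖ ≤ κ·‖Λ¹⁰‖`), then: (i) `α = 0 ↔ β = 0`; and (ii) if `α ≠ 0` then `α` and `β`
are linearly independent over `ℝ` — equivalently, `Λ : V → ℂ` is surjective. -/
theorem quasi_holomorphic_vanish_or_surjective
    {V : Type*} [NormedAddCommGroup V] [InnerProductSpace ℝ V] [FiniteDimensional ℝ V]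
    (J : V →ₗᵢ[ℝ] V) (hJ : ∀ v, J (J v) = -v)
    (α β : V →L[ℝ] ℝ) (κ : ℝ) (hκ0 : 0 ≤ κ) (hκ1 : κ < 1)
    (Λ Λ01 Λ10 : V →L[ℝ] ℂ)
    (hΛ : ∀ v, Λ v = (α v : ℂ) + Complex.I * (β v : ℂ))
    (hΛ01 : ∀ v, Λ01 v = (1/2 : ℂ) * (Λ v + Complex.I * Λ (J v)))
    (hΛ10 : ∀ v, Λ10 v = (1/2 : ℂ) * (Λ v - Complex.I * Λ (J v)))
    (hqh : ‖Λ01‖ ≤ κ * ‖Λ10‖) :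
    (α = 0 ↔ β = 0) ∧
    (α ≠ 0 → LinearIndependent ℝ ![α, β] ∧ Function.Surjective Λ) := by
  obtain rfl : Λ01 = antiholomorphicPart J.toContinuousLinearMap Λ := ContinuousLinearMap.ext hΛ01
  obtain rfl : Λ10 = holomorphicPart J.toContinuousLinearMap Λ := ContinuousLinearMap.ext hΛ10
  exact quasi_holomorphic_vanish_or_surjective_general hκ1 hΛ hqh
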